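/- Let G be a group, k a commutative G-ring, n a natural number, and ε ∈ k invertible. Then there is an isomorphism of graded k-modules Tor_*^{GBR_n(ε)}(𝟙,𝟙) ≅ Tor_*^{k[G^n ⋊ B_n]}(k,k) = H_*(G^n ⋊ B_n; k), where the braid group B_n acts on G^n by permuting the factors (via the projection B_n → Σ_n). -/

import Mathlib

open scoped TensorProduct

noncomputable section

/-! ### Bar-complex homology of an augmented algebra

For a `k`-algebra `A` with augmentation `ε : A →ₐ[k] k` (the algebra map corresponding to
the trivial module `𝟙 = k`), we form the (unnormalized) bar complex `C_q = A^{⊗ q}`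
(tensors over `k`), with the usual differential
`d(a₁⊗…⊗a_q) = ε(a₁)(a₂⊗…) + Σ (-1)^i (…a_i a_{i+1}…) + (-1)^q ε(a_q)(a₁⊗…)`,
whose homology is `Tor_*^A(𝟙,𝟙)`. -/

/-- The modules `A^{⊗ q}` of the bar complex. -/
def barC (k : Type) [CommRing k] (A : Type) [Ring A] [Algebra k A] : ℕ → ModuleCat k
  | 0 => ModuleCat.of k k
  | (q + 1) => ModuleCat.of k (A ⊗[k] (barC k A q))

variable (k : Type) [CommRing k] (A : Type) [Ring A] [Algebra k A] (ε : A →ₐ[k] k)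

/-- Left multiplication of `A` on the leftmost bar factor (via `ε` in degree `0`). -/
def barAct : ∀ q : ℕ, A →ₗ[k] ((barC k A q : Type) →ₗ[k] (barC k A q : Type))
  | 0 => (LinearMap.lsmul k k).comp ε.toLinearMap
  | (q + 1) =>
    show A →ₗ[k] ((A ⊗[k] (barC k A q : Type)) →ₗ[k] (A ⊗[k] (barC k A q : Type))) from
    { toFun := fun a => TensorProduct.map (LinearMap.mulLeft k a) LinearMap.id
      map_add' := by
        intro a b
        refine TensorProduct.ext' fun x y => ?_
        simp [add_mul, TensorProduct.add_tmul]
      map_smul' := by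
        intro c a
        refine TensorProduct.ext' fun x y => ?_
        simp [TensorProduct.smul_tmul', smul_mul_assoc] }

/-- All terms of the bar differential except the first face. -/
def barB : ∀ q : ℕ, ((A ⊗[k] (barC k A q : Type)) →ₗ[k] (barC k A q : Type))
  | 0 => - TensorProduct.lift ((LinearMap.lsmul k (barC k A 0 : Type)).comp ε.toLinearMap)
  | (q + 1) =>
    show (A ⊗[k] (A ⊗[k] (barC k A q : Type))) →ₗ[k] (A ⊗[k] (barC k A q : Type)) from
    TensorProduct.lift (LinearMap.mk₂ k
      (fun (a : A) (x : A ⊗[k] (barC k A q : Type)) =>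
        -((show A →ₗ[k] ((A ⊗[k] (barC k A q : Type)) →ₗ[k] (A ⊗[k] (barC k A q : Type))) from
            barAct k A ε (q + 1)) a x) - a ⊗ₜ[k] (barB q x))
      (by intro a b x
          suffices key : ∀ F : A →ₗ[k] ((A ⊗[k] (barC k A q : Type)) →ₗ[k] (A ⊗[k] (barC k A q : Type))),
              -(F (a + b) x) - (a + b) ⊗ₜ[k] (barB q x)
                = (-(F a x) - a ⊗ₜ[k] (barB q x)) + (-(F b x) - b ⊗ₜ[k] (barB q x)) from key _
          intro F
          simp only [map_add, LinearMap.add_apply, TensorProduct.add_tmul]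
          try abel)
      (by intro c a x
          suffices key : ∀ F : A →ₗ[k] ((A ⊗[k] (barC k A q : Type)) →ₗ[k] (A ⊗[k] (barC k A q : Type))),
              -(F (c • a) x) - (c • a) ⊗ₜ[k] (barB q x)
                = c • (-(F a x) - a ⊗ₜ[k] (barB q x)) from key _
          intro F
          simp only [map_smul, LinearMap.smul_apply, smul_sub, smul_neg,
            TensorProduct.smul_tmul'])
      (by intro a x y
          simp only [map_add, LinearMap.map_add, TensorProduct.tmul_add]
          try abel)
      (by intro c a x
          simp only [map_smul, LinearMap.map_smul, TensorProduct.tmul_smul, smul_sub, smul_neg]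
          try abel))

/-- The bar differential `C_{q+1} = A ⊗ C_q → C_q`. -/
def bard (q : ℕ) : (A ⊗[k] (barC k A q : Type)) →ₗ[k] (barC k A q : Type) :=
  TensorProduct.lift ((LinearMap.lsmul k (barC k A q : Type)).comp ε.toLinearMap)
  + barB k A ε q

/-- Cycles of the bar complex. -/
def barCycles : ∀ q : ℕ, Submodule k (barC k A q : Type)
  | 0 => ⊤
  | (q + 1) =>
    show Submodule k (barC k A (q + 1) : Type) from LinearMap.ker (bard k A ε q)

/-- `Tor_q^A(𝟙, 𝟙)`, the homology of the algebra `A` with augmentation (trivial module) `ε`,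
computed by the bar complex. -/
def barTor (q : ℕ) : Type :=
  (barCycles k A ε q) ⧸
    (Submodule.comap (barCycles k A ε q).subtype (LinearMap.range (bard k A ε q)))

instance (q : ℕ) : AddCommGroup (barTor k A ε q) :=
  inferInstanceAs (AddCommGroup ((barCycles k A ε q) ⧸
    (Submodule.comap (barCycles k A ε q).subtype (LinearMap.range (bard k A ε q)))))

instance (q : ℕ) : Module k (barTor k A ε q) :=
  inferInstanceAs (Module k ((barCycles k A ε q) ⧸
    (Submodule.comap (barCycles k A ε q).subtype (LinearMap.range (bard k A ε q)))))

/-- The augmentation of a group algebra `k[G]`, corresponding to the trivial action of `G`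
on `k`. -/
def groupAug (G : Type) [Group G] : MonoidAlgebra k G →ₐ[k] k :=
  MonoidAlgebra.lift k k G 1

/-- Group homology `H_*(G; k) = Tor_*^{k[G]}(k, k)` (with the trivial action on `k`). -/
abbrev groupTor (G : Type) [Group G] (q : ℕ) : Type :=
  barTor k (MonoidAlgebra k G) (groupAug k G) q

section Groups

/-- The action of the symmetric group on `G^n` by permuting the factors. -/
def permMulAut (G : Type) [Group G] (n : ℕ) :
    Equiv.Perm (Fin n) →* MulAut (Fin n → G) where
  toFun σ :=
    { toFun := fun f => f ∘ σ.symm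
      invFun := fun f => f ∘ σ
      left_inv := fun f => by funext i; simp
      right_inv := fun f => by funext i; simp
      map_mul' := fun f g => rfl }
  map_one' := by ext f i; rfl
  map_mul' := fun σ τ => by ext f i; rfl

/-- The Artin braid relations, on `m` generators (so for the braid group on `m+1` strands). -/
def braidRels (m : ℕ) : Set (FreeGroup (Fin m)) :=
  { x | ∃ i j : Fin m,
      ((i : ℕ) + 1 = (j : ℕ) ∧
        x = .of i * .of j * .of i * (.of j * .of i * .of j)⁻¹) ∨
      ((i : ℕ) + 1 < (j : ℕ) ∧
        x = .of i * .of j * (.of j * .of i)⁻¹) }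

/-- The braid group `B_n` on `n` strands, presented by the Artin generators
`σ_1, …, σ_{n-1}` and the braid relations. -/
abbrev BraidGroup (n : ℕ) : Type := PresentedGroup (braidRels (n - 1))

private lemma swap_braid {α : Type} [DecidableEq α] (a b c : α)
    (hab : a ≠ b) (hac : a ≠ c) (hbc : b ≠ c) :
    Equiv.swap a b * Equiv.swap b c * Equiv.swap a b
      = Equiv.swap b c * Equiv.swap a b * Equiv.swap b c := by
  have h1 : Equiv.swap b c * Equiv.swap a b * Equiv.swap b c = Equiv.swap c a :=
    Equiv.swap_mul_swap_mul_swap hab hac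
  have h2 : Equiv.swap b a * Equiv.swap c b * Equiv.swap b a = Equiv.swap a c :=
    Equiv.swap_mul_swap_mul_swap hbc.symm hac.symm
  rw [Equiv.swap_comm b a, Equiv.swap_comm c b] at h2
  rw [h1, h2, Equiv.swap_comm]

private lemma swap_swap_comm {α : Type} [DecidableEq α] (a b c d : α)
    (hac : a ≠ c) (had : a ≠ d) (hbc : b ≠ c) (hbd : b ≠ d) :
    Equiv.swap a b * Equiv.swap c d = Equiv.swap c d * Equiv.swap a b := by
  have h := Equiv.swap_apply_apply (Equiv.swap c d) a b
  rw [Equiv.swap_apply_of_ne_of_ne hac had, Equiv.swap_apply_of_ne_of_ne hbc hbd] at h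
  exact eq_mul_inv_iff_mul_eq.mp h

/-- The transpositions which are the images of the braid generators. -/
def braidGen (n : ℕ) (i : Fin (n - 1)) : Equiv.Perm (Fin n) :=
  Equiv.swap ⟨(i : ℕ), by have := i.2; omega⟩ ⟨(i : ℕ) + 1, by have := i.2; omega⟩

private lemma braidGen_braid (n : ℕ) (i j : Fin (n - 1)) (hij : (i : ℕ) + 1 = (j : ℕ)) :
    braidGen n i * braidGen n j * braidGen n i
      = braidGen n j * braidGen n i * braidGen n j := by
  obtain ⟨i, hi⟩ := i
  obtain ⟨j, hj⟩ := j
  simp only at hij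
  subst hij
  unfold braidGen
  exact swap_braid _ _ _ (by simp only [ne_eq, Fin.mk.injEq]; omega)
    (by simp only [ne_eq, Fin.mk.injEq]; omega) (by simp only [ne_eq, Fin.mk.injEq]; omega)

private lemma braidGen_comm (n : ℕ) (i j : Fin (n - 1)) (hij : (i : ℕ) + 1 < (j : ℕ)) :
    braidGen n i * braidGen n j = braidGen n j * braidGen n i := by
  unfold braidGen
  exact swap_swap_comm _ _ _ _ (by simp only [ne_eq, Fin.mk.injEq]; omega)
    (by simp only [ne_eq, Fin.mk.injEq]; omega) (by simp only [ne_eq, Fin.mk.injEq]; omega)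
    (by simp only [ne_eq, Fin.mk.injEq]; omega)

/-- The canonical projection from the braid group to the symmetric group. -/
def braidToPerm (n : ℕ) : BraidGroup n →* Equiv.Perm (Fin n) :=
  PresentedGroup.toGroup (f := braidGen n) (by
    rintro r ⟨i, j, (⟨hij, rfl⟩ | ⟨hij, rfl⟩)⟩ <;>
      simp only [map_mul, map_inv, FreeGroup.lift_apply_of] <;> rw [mul_inv_eq_one]
    · exact braidGen_braid n i j hij
    · exact braidGen_comm n i j hij)

end Groups

section GBRsection

/-! The `G`-equivariant braided rook algebra `GBR_n(ε)`: generators `b i`/`bi i`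
(over/under crossings), `p j` (deleted strand) and `t g j` (label `g : G` on strand `j`);
a contractible middle component contributes the factor `ε`. -/

inductive GBRGen (n : ℕ) (G : Type) : Type
  | b : Fin (n - 1) → GBRGen n G
  | bi : Fin (n - 1) → GBRGen n G
  | p : Fin n → GBRGen n G
  | t : G → Fin n → GBRGen n G

variable (k G : Type) [CommRing k] [Group G] (n : ℕ) (ε : k)

abbrev GBRb (i : Fin (n - 1)) : FreeAlgebra k (GBRGen n G) := FreeAlgebra.ι k (GBRGen.b i)
abbrev GBRbi (i : Fin (n - 1)) : FreeAlgebra k (GBRGen n G) := FreeAlgebra.ι k (GBRGen.bi i)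
abbrev GBRp (j : Fin n) : FreeAlgebra k (GBRGen n G) := FreeAlgebra.ι k (GBRGen.p j)
abbrev GBRt (g : G) (j : Fin n) : FreeAlgebra k (GBRGen n G) := FreeAlgebra.ι k (GBRGen.t g j)

/-- The diagrammatic relations. -/
inductive GBRRel : FreeAlgebra k (GBRGen n G) → FreeAlgebra k (GBRGen n G) → Prop
  | b_inv_r (i : Fin (n - 1)) :
      GBRRel (GBRb k G n i * GBRbi k G n i) (1)
  | b_inv_l (i : Fin (n - 1)) :
      GBRRel (GBRbi k G n i * GBRb k G n i) (1)
  | b_braid (i j : Fin (n - 1)) (h : (j : ℕ) = (i : ℕ) + 1) :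
      GBRRel (GBRb k G n i * GBRb k G n j * GBRb k G n i) (GBRb k G n j * GBRb k G n i * GBRb k G n j)
  | bb_comm (i j : Fin (n - 1)) (h : (i : ℕ) + 1 < (j : ℕ)) :
      GBRRel (GBRb k G n i * GBRb k G n j) (GBRb k G n j * GBRb k G n i)
  | p_sq (j : Fin n) :
      GBRRel (GBRp k G n j * GBRp k G n j) (ε • GBRp k G n j)
  | pp_comm (j l : Fin n) (h : (j : ℕ) < (l : ℕ)) :
      GBRRel (GBRp k G n j * GBRp k G n l) (GBRp k G n l * GBRp k G n j)
  | bp_comm (i : Fin (n - 1)) (l : Fin n) (h : (l : ℕ) ≠ (i : ℕ) ∧ (l : ℕ) ≠ (i : ℕ) + 1) :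
      GBRRel (GBRb k G n i * GBRp k G n l) (GBRp k G n l * GBRb k G n i)
  | bp_slide (i : Fin (n - 1)) (j j' : Fin n) (h : (j : ℕ) = (i : ℕ)) (h' : (j' : ℕ) = (i : ℕ) + 1) :
      GBRRel (GBRb k G n i * GBRp k G n j) (GBRp k G n j' * GBRb k G n i)
  | bp_slide' (i : Fin (n - 1)) (j j' : Fin n) (h : (j : ℕ) = (i : ℕ)) (h' : (j' : ℕ) = (i : ℕ) + 1) :
      GBRRel (GBRb k G n i * GBRp k G n j') (GBRp k G n j * GBRb k G n i)
  | pbp (i : Fin (n - 1)) (j j' : Fin n) (h : (j : ℕ) = (i : ℕ)) (h' : (j' : ℕ) = (i : ℕ) + 1) :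
      GBRRel (GBRp k G n j * GBRb k G n i * GBRp k G n j) (GBRp k G n j * GBRp k G n j')
  | pbb (i : Fin (n - 1)) (j : Fin n) (h : (j : ℕ) = (i : ℕ)) :
      GBRRel (GBRp k G n j * GBRb k G n i * GBRb k G n i) (GBRp k G n j)
  | pbb' (i : Fin (n - 1)) (j' : Fin n) (h' : (j' : ℕ) = (i : ℕ) + 1) :
      GBRRel (GBRp k G n j' * GBRb k G n i * GBRb k G n i) (GBRp k G n j')
  | t_mul (g h' : G) (j : Fin n) :
      GBRRel (GBRt k G n g j * GBRt k G n h' j) (GBRt k G n (g * h') j)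
  | t_one (j : Fin n) :
      GBRRel (GBRt k G n 1 j) (1)
  | tt_comm (g h' : G) (j l : Fin n) (h : j ≠ l) :
      GBRRel (GBRt k G n g j * GBRt k G n h' l) (GBRt k G n h' l * GBRt k G n g j)
  | bt_comm (g : G) (i : Fin (n - 1)) (l : Fin n) (h : (l : ℕ) ≠ (i : ℕ) ∧ (l : ℕ) ≠ (i : ℕ) + 1) :
      GBRRel (GBRb k G n i * GBRt k G n g l) (GBRt k G n g l * GBRb k G n i)
  | bt_slide (g : G) (i : Fin (n - 1)) (j j' : Fin n) (h : (j : ℕ) = (i : ℕ)) (h' : (j' : ℕ) = (i : ℕ) + 1) :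
      GBRRel (GBRb k G n i * GBRt k G n g j) (GBRt k G n g j' * GBRb k G n i)
  | bt_slide' (g : G) (i : Fin (n - 1)) (j j' : Fin n) (h : (j : ℕ) = (i : ℕ)) (h' : (j' : ℕ) = (i : ℕ) + 1) :
      GBRRel (GBRb k G n i * GBRt k G n g j') (GBRt k G n g j * GBRb k G n i)
  | tp_absorb (g : G) (j : Fin n) :
      GBRRel (GBRt k G n g j * GBRp k G n j) (GBRp k G n j)
  | pt_absorb (g : G) (j : Fin n) :
      GBRRel (GBRp k G n j * GBRt k G n g j) (GBRp k G n j)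
  | tp_comm (g : G) (j l : Fin n) (h : j ≠ l) :
      GBRRel (GBRt k G n g j * GBRp k G n l) (GBRp k G n l * GBRt k G n g j)

/-- The diagram algebra: the quotient of the free algebra on the diagram generators by
the diagrammatic relations. -/
abbrev GBRAlg : Type := RingQuot (GBRRel k G n ε)

/-- The augmentation corresponding to the trivial module `𝟙`: a diagram acts by `1`
if it has `n` left-to-right connections, and by `0` otherwise. -/
noncomputable def GBRaug : GBRAlg k G n ε →ₐ[k] k :=
  RingQuot.liftAlgHom k ⟨FreeAlgebra.lift k
      (fun x => match x with
        | GBRGen.b _ => (1 : k)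
        | GBRGen.bi _ => (1 : k)
        | GBRGen.p _ => (0 : k)
        | GBRGen.t _ _ => (1 : k)),
    by rintro x y h
       induction h <;>
         simp [GBRb, GBRbi, GBRp, GBRt, FreeAlgebra.lift_ι_apply]⟩

end GBRsection

section BarHelpers

variable {k : Type} [CommRing k] {A : Type} [Ring A] [Algebra k A]
variable {A' : Type} [Ring A'] [Algebra k A']

/-- The bilinear map `A × C_q → C_{q+1}`. -/
def bt (q : ℕ) : A →ₗ[k] (barC k A q : Type) →ₗ[k] (barC k A (q + 1) : Type) :=
  TensorProduct.mk k A (barC k A q : Type)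

lemma bt_ext {q : ℕ} {M : Type} [AddCommGroup M] [Module k M]
    {f g : (barC k A (q + 1) : Type) →ₗ[k] M}
    (h : ∀ a x, f (bt q a x) = g (bt q a x)) : f = g :=
  TensorProduct.ext' (R := k) (M := A) (N := (barC k A q : Type)) (P₂ := M)
    (g := f) (h := g) h

/-- Lift out of `C_{q+1}`. -/
def btLift {q : ℕ} {M : Type} [AddCommGroup M] [Module k M]
    (f : A →ₗ[k] (barC k A q : Type) →ₗ[k] M) : (barC k A (q + 1) : Type) →ₗ[k] M :=
  TensorProduct.lift f

lemma btLift_bt {q : ℕ} {M : Type} [AddCommGroup M] [Module k M]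
    (f : A →ₗ[k] (barC k A q : Type) →ₗ[k] M) (a : A) (x : (barC k A q : Type)) :
    btLift f (bt q a x) = f a x :=
  TensorProduct.lift.tmul _ _

variable (ε : A →ₐ[k] k) (ε' : A' →ₐ[k] k)

/-- `barB` with source `C_{q+1}`. -/
def cB (q : ℕ) : (barC k A (q + 1) : Type) →ₗ[k] (barC k A q : Type) := barB k A ε q

/-- `bard` with source `C_{q+1}`. -/
def cd (q : ℕ) : (barC k A (q + 1) : Type) →ₗ[k] (barC k A q : Type) := bard k A ε q

lemma cd_bt (q : ℕ) (a : A) (x : (barC k A q : Type)) :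
    cd ε q (bt q a x) = ε a • x + cB ε q (bt q a x) := by
  rfl

lemma cB_zero (a : A) (x : (barC k A 0 : Type)) :
    cB ε 0 (bt 0 a x) = -(ε a • x) := by
  rfl

lemma cB_succ (q : ℕ) (a : A) (x : (barC k A (q + 1) : Type)) :
    cB ε (q + 1) (bt (q + 1) a x) = -(barAct k A ε (q + 1) a x) - bt q a (cB ε q x) := by
  rfl

lemma barAct_succ (q : ℕ) (a b : A) (x : (barC k A q : Type)) :
    barAct k A ε (q + 1) a (bt q b x) = bt q (a * b) x := by
  rfl

lemma barAct_zero (a : A) (x : (barC k A 0 : Type)) :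
    barAct k A ε 0 a x = ε a • x := by
  rfl

/-- Functoriality of the bar complex. -/
def cMap (f : A →ₗ[k] A') : ∀ q : ℕ, (barC k A q : Type) →ₗ[k] (barC k A' q : Type)
  | 0 => LinearMap.id
  | (q + 1) => btLift ((bt q).compl₁₂ f (cMap f q))

lemma cMap_bt (f : A →ₗ[k] A') (q : ℕ) (a : A) (x : (barC k A q : Type)) :
    cMap f (q + 1) (bt q a x) = bt q (f a) (cMap f q x) := by
  rw [cMap, btLift_bt]; rfl

lemma cMap_zero (f : A →ₗ[k] A') (x : (barC k A 0 : Type)) : cMap f 0 x = x := rfl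

lemma cMap_act (f : A →ₗ[k] A') (hf : ∀ a b, f (a * b) = f a * f b)
    (q : ℕ) (a : A) (x : (barC k A (q + 1) : Type)) :
    cMap f (q + 1) (barAct k A ε (q + 1) a x)
      = barAct k A' ε' (q + 1) (f a) (cMap f (q + 1) x) := by
  have : (cMap f (q + 1)).comp (barAct k A ε (q + 1) a)
      = (barAct k A' ε' (q + 1) (f a)).comp (cMap f (q + 1)) := by
    apply bt_ext
    intro b y
    simp only [LinearMap.comp_apply]
    rw [barAct_succ, cMap_bt, cMap_bt, barAct_succ, hf]
  exact LinearMap.congr_fun this x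

lemma cMap_B (f : A →ₗ[k] A') (hf : ∀ a b, f (a * b) = f a * f b)
    (he : ∀ a, ε' (f a) = ε a) (q : ℕ) (x : (barC k A (q + 1) : Type)) :
    cMap f q (cB ε q x) = cB ε' q (cMap f (q + 1) x) := by
  induction q with
  | zero =>
    have : (cMap f 0).comp (cB ε 0) = (cB ε' 0).comp (cMap f 1) := by
      apply bt_ext
      intro a x
      simp only [LinearMap.comp_apply]
      rw [cMap_bt, cB_zero, cB_zero, he]; rfl
    exact LinearMap.congr_fun this x
  | succ q ih =>
    have : (cMap f (q + 1)).comp (cB ε (q + 1)) = (cB ε' (q + 1)).comp (cMap f (q + 2)) := by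
      apply bt_ext
      intro a x
      simp only [LinearMap.comp_apply]
      rw [cMap_bt, cB_succ, cB_succ, map_sub, map_neg, cMap_act ε ε' f hf, cMap_bt, ih]
    exact LinearMap.congr_fun this x

lemma cMap_d (f : A →ₗ[k] A') (hf : ∀ a b, f (a * b) = f a * f b)
    (he : ∀ a, ε' (f a) = ε a) (q : ℕ) (x : (barC k A (q + 1) : Type)) :
    cMap f q (cd ε q x) = cd ε' q (cMap f (q + 1) x) := by
  have : (cMap f q).comp (cd ε q) = (cd ε' q).comp (cMap f (q + 1)) := by
    apply bt_ext
    intro a x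
    simp only [LinearMap.comp_apply]
    rw [cd_bt, map_add, cMap_B ε ε' f hf he, cMap_bt, cd_bt, map_smul, he]
  exact LinearMap.congr_fun this x

lemma cMap_id (f : A →ₗ[k] A) (hf : ∀ a, f a = a) (q : ℕ) (x : (barC k A q : Type)) :
    cMap f q x = x := by
  induction q with
  | zero => rfl
  | succ q ih =>
    have : (cMap f (q + 1)) = LinearMap.id := by
      apply bt_ext
      intro a x
      rw [cMap_bt, ih, hf]; rfl
    exact LinearMap.congr_fun this x

lemma cMap_comp {A'' : Type} [Ring A''] [Algebra k A''] (f : A →ₗ[k] A') (g : A' →ₗ[k] A'')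
    (h : A →ₗ[k] A'') (hf : ∀ a, g (f a) = h a) (q : ℕ) (x : (barC k A q : Type)) :
    cMap g q (cMap f q x) = cMap h q x := by
  induction q with
  | zero => rfl
  | succ q ih =>
    have : (cMap g (q + 1)).comp (cMap f (q + 1)) = cMap h (q + 1) := by
      apply bt_ext
      intro a x
      simp only [LinearMap.comp_apply]
      rw [cMap_bt, cMap_bt, cMap_bt, ih, hf]
    exact LinearMap.congr_fun this x

/-- The homotopy attached to a central element `π`. -/
def cH (π : A) : ∀ q : ℕ, (barC k A q : Type) →ₗ[k] (barC k A (q + 1) : Type)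
  | 0 => bt 0 π
  | (q + 1) => bt (q + 1) π - btLift ((bt (q + 1)).compl₁₂ (LinearMap.mulLeft k π) (cH π q))

lemma cH_zero (π : A) (x : (barC k A 0 : Type)) : cH π 0 x = bt 0 π x := rfl

lemma cH_succ (π : A) (q : ℕ) (a : A) (x : (barC k A q : Type)) :
    cH π (q + 1) (bt q a x) = bt (q + 1) π (bt q a x) - bt (q + 1) (π * a) (cH π q x) := by
  rw [cH, LinearMap.sub_apply, btLift_bt]; rfl

lemma cH_B_zero (π : A) (hπ : ε π = 1) (x : (barC k A 0 : Type)) :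
    cB ε 0 (cH π 0 x) = - cMap (LinearMap.mulLeft k π) 0 x := by
  rw [cH_zero, cB_zero, hπ, one_smul]; rfl

lemma cH_B (π : A) (hπ : ε π = 1) (hi : π * π = π) (hc : ∀ a, π * a = a * π) (q : ℕ)
    (x : (barC k A (q + 1) : Type)) :
    cB ε (q + 1) (cH π (q + 1) x) + cH π q (cB ε q x)
      = - cMap (LinearMap.mulLeft k π) (q + 1) x := by
  induction q with
  | zero =>
    have : (cB ε 1).comp (cH π 1) + (cH π 0).comp (cB ε 0)
        = - cMap (LinearMap.mulLeft k π) 1 := by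
      apply bt_ext
      intro a x
      simp only [LinearMap.comp_apply, LinearMap.add_apply, LinearMap.neg_apply]
      have h1 : π * a * π = π * a := by rw [mul_assoc, ← hc a, ← mul_assoc, hi]
      rw [cH_succ, map_sub, cB_succ, cB_succ, cH_zero, cH_zero, barAct_succ, barAct_succ,
        cB_zero, cB_zero, cMap_bt, cMap_zero, hπ, one_smul, h1]
      simp only [map_neg, map_smul, LinearMap.mulLeft_apply]
      abel
    exact LinearMap.congr_fun this x
  | succ q ih =>
    have : (cB ε (q + 2)).comp (cH π (q + 2)) + (cH π (q + 1)).comp (cB ε (q + 1))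
        = - cMap (LinearMap.mulLeft k π) (q + 2) := by
      apply bt_ext
      intro a x
      have key : cH π (q + 1) (cB ε (q + 1) (bt (q + 1) a x))
          = bt (q + 1) π (cB ε (q + 1) (bt (q + 1) a x))
            - barAct k A ε (q + 2) (π * a) (cH π (q + 1) x)
            + bt (q + 1) (π * a) x + bt (q + 1) (π * a) (cH π q (cB ε q x)) := by
        have : (cH π (q + 1)).comp ((cB ε (q + 1)).comp (bt (q + 1) a))
          = (bt (q + 1) π).comp ((cB ε (q + 1)).comp (bt (q + 1) a))
            - (barAct k A ε (q + 2) (π * a)).comp (cH π (q + 1))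
            + bt (q + 1) (π * a) + (bt (q + 1) (π * a)).comp ((cH π q).comp (cB ε q)) := by
          apply bt_ext
          intro b y
          have h1 : π * a * π = π * a := by rw [mul_assoc, ← hc a, ← mul_assoc, hi]
          have h2 : π * a * (π * b) = π * (a * b) := by
            rw [← mul_assoc, h1, mul_assoc]
          simp only [LinearMap.comp_apply, LinearMap.add_apply, LinearMap.sub_apply]
          rw [cB_succ, barAct_succ, map_sub, map_neg, cH_succ, cH_succ, cH_succ, map_sub,
            map_sub, map_neg, barAct_succ, barAct_succ, h1, h2]
          abel
        exact LinearMap.congr_fun this x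
      simp only [LinearMap.comp_apply, LinearMap.add_apply, LinearMap.neg_apply]
      rw [key, cH_succ, map_sub, cB_succ ε (q + 1) π, cB_succ ε (q + 1) (π * a), barAct_succ, cMap_bt,
        LinearMap.mulLeft_apply, ← neg_neg (cMap (LinearMap.mulLeft k π) (q + 1) x), ← ih]
      simp only [map_neg, map_add]
      abel
    exact LinearMap.congr_fun this x

lemma cH_d_zero (π : A) (hπ : ε π = 1) (x : (barC k A 0 : Type)) :
    cd ε 0 (cH π 0 x) = x - cMap (LinearMap.mulLeft k π) 0 x := by
  rw [cH_zero, cd_bt, ← cH_zero, cH_B_zero ε π hπ, hπ, one_smul, sub_eq_add_neg]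

lemma cH_d (π : A) (hπ : ε π = 1) (hi : π * π = π) (hc : ∀ a, π * a = a * π) (q : ℕ)
    (x : (barC k A (q + 1) : Type)) :
    cd ε (q + 1) (cH π (q + 1) x) + cH π q (cd ε q x)
      = x - cMap (LinearMap.mulLeft k π) (q + 1) x := by
  have : (cd ε (q + 1)).comp (cH π (q + 1)) + (cH π q).comp (cd ε q)
      = LinearMap.id - cMap (LinearMap.mulLeft k π) (q + 1) := by
    apply bt_ext
    intro a x
    simp only [LinearMap.comp_apply, LinearMap.add_apply, LinearMap.sub_apply, LinearMap.id_apply]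
    have h := cH_B ε π hπ hi hc q (bt q a x)
    rw [sub_eq_add_neg, ← h, cH_succ, map_sub, map_sub, cd_bt, cd_bt, cd_bt]
    simp only [map_add, map_smul, hπ, map_mul, one_mul, one_smul]
    abel
  exact LinearMap.congr_fun this x

/-- Map on homology induced by a multiplicative, augmentation-preserving linear map. -/
def torMap (f : A →ₗ[k] A') (hf : ∀ a b, f (a * b) = f a * f b)
    (he : ∀ a, ε' (f a) = ε a) (q : ℕ) : barTor k A ε q →ₗ[k] barTor k A' ε' q :=
  Submodule.mapQ _ _ ((cMap f q).restrict (p := barCycles k A ε q) (q := barCycles k A' ε' q) (by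
      intro x hx
      cases q with
      | zero => exact Submodule.mem_top
      | succ q =>
        change cd ε' q (cMap f (q + 1) x) = 0
        rw [← cMap_d ε ε' f hf he]
        have hx : cd ε q x = 0 := hx
        rw [hx, map_zero]))
    (by
      rintro ⟨x, hx⟩ ⟨y, hy⟩
      refine ⟨cMap f (q + 1) y, ?_⟩
      exact (cMap_d ε ε' f hf he q y).symm.trans (congrArg (cMap f q) hy))

/-- Homology only sees the summand cut out by a central idempotent. -/
def torEquiv (π : A) (hπ : ε π = 1) (hi : π * π = π) (hc : ∀ a, π * a = a * π)
    (f : A →ₗ[k] A') (hf : ∀ a b, f (a * b) = f a * f b) (he : ∀ a, ε' (f a) = ε a)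
    (s : A' →ₗ[k] A) (hs : ∀ a b, s (a * b) = s a * s b) (hse : ∀ a, ε (s a) = ε' a)
    (hfs : ∀ a, f (s a) = a) (hsf : ∀ a, s (f a) = π * a) (q : ℕ) :
    barTor k A ε q ≃ₗ[k] barTor k A' ε' q :=
  LinearEquiv.ofLinearMap (torMap ε ε' f hf he q) (torMap ε' ε s hs hse q)
    (by
      refine LinearMap.ext fun z => ?_
      obtain ⟨⟨x, hx⟩, rfl⟩ := Submodule.Quotient.mk_surjective _ z
      refine congrArg Submodule.Quotient.mk (Subtype.ext ?_)
      change cMap f q (cMap s q x) = x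
      rw [cMap_comp s f LinearMap.id hfs, cMap_id _ (fun _ => rfl)])
    (by
      refine LinearMap.ext fun z => ?_
      obtain ⟨⟨x, hx⟩, rfl⟩ := Submodule.Quotient.mk_surjective _ z
      refine Eq.symm ((Submodule.Quotient.eq _).2 ?_)
      refine ⟨cH π q x, ?_⟩
      change cd ε q (cH π q x) = x - cMap s q (cMap f q x)
      rw [cMap_comp f s (LinearMap.mulLeft k π) hsf]
      cases q with
      | zero => exact cH_d_zero ε π hπ x
      | succ q =>
        have hx : cd ε q x = 0 := hx
        rw [← cH_d ε π hπ hi hc, hx, map_zero, add_zero])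

end BarHelpers

section GBRHelpers

variable (k G : Type) [CommRing k] [Group G] (n : ℕ) (ε : k)

/-- The quotient map from the free algebra. -/
abbrev gq : FreeAlgebra k (GBRGen n G) →ₐ[k] GBRAlg k G n ε :=
  RingQuot.mkAlgHom k (GBRRel k G n ε)

/-- Images of the generators. -/
def gb (i : Fin (n - 1)) : GBRAlg k G n ε := gq k G n ε (GBRb k G n i)
def gbi (i : Fin (n - 1)) : GBRAlg k G n ε := gq k G n ε (GBRbi k G n i)
def gp (j : Fin n) : GBRAlg k G n ε := gq k G n ε (GBRp k G n j)
def gt (g : G) (j : Fin n) : GBRAlg k G n ε := gq k G n ε (GBRt k G n g j)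

lemma gq_rel {x y : FreeAlgebra k (GBRGen n G)} (h : GBRRel k G n ε x y) :
    gq k G n ε x = gq k G n ε y := RingQuot.mkAlgHom_rel k h

lemma gb_gbi (i : Fin (n - 1)) : gb k G n ε i * gbi k G n ε i = 1 := by
  simpa only [gb, gbi, gp, gt, map_mul, map_one] using gq_rel k G n ε (GBRRel.b_inv_r i)

lemma gbi_gb (i : Fin (n - 1)) : gbi k G n ε i * gb k G n ε i = 1 := by
  simpa only [gb, gbi, gp, gt, map_mul, map_one] using gq_rel k G n ε (GBRRel.b_inv_l i)

lemma gb_braid (i j : Fin (n - 1)) (h : (j : ℕ) = (i : ℕ) + 1) :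
    gb k G n ε i * gb k G n ε j * gb k G n ε i = gb k G n ε j * gb k G n ε i * gb k G n ε j := by
  simpa only [gb, gbi, gp, gt, map_mul] using gq_rel k G n ε (GBRRel.b_braid i j h)

lemma gb_comm (i j : Fin (n - 1)) (h : (i : ℕ) + 1 < (j : ℕ)) :
    gb k G n ε i * gb k G n ε j = gb k G n ε j * gb k G n ε i := by
  simpa only [gb, gbi, gp, gt, map_mul] using gq_rel k G n ε (GBRRel.bb_comm i j h)

lemma gp_sq (j : Fin n) : gp k G n ε j * gp k G n ε j = ε • gp k G n ε j := by
  simpa only [gb, gbi, gp, gt, map_mul, map_smul] using gq_rel k G n ε (GBRRel.p_sq j)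

lemma gp_comm (j l : Fin n) : gp k G n ε j * gp k G n ε l = gp k G n ε l * gp k G n ε j := by
  rcases lt_trichotomy (j : ℕ) (l : ℕ) with h | h | h
  · simpa only [gb, gbi, gp, gt, map_mul] using gq_rel k G n ε (GBRRel.pp_comm j l h)
  · rw [Fin.ext h]
  · simpa only [gb, gbi, gp, gt, map_mul] using (gq_rel k G n ε (GBRRel.pp_comm l j h)).symm

lemma braidGen_cases (i : Fin (n - 1)) (l : Fin n) :
    ((l : ℕ) ≠ (i : ℕ) ∧ (l : ℕ) ≠ (i : ℕ) + 1 ∧ braidGen n i l = l) ∨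
    ((l : ℕ) = (i : ℕ) ∧ (braidGen n i l : ℕ) = (i : ℕ) + 1) ∨
    ((braidGen n i l : ℕ) = (i : ℕ) ∧ (l : ℕ) = (i : ℕ) + 1) := by
  have hi := i.2
  by_cases h1 : (l : ℕ) = (i : ℕ)
  · right; left
    refine ⟨h1, ?_⟩
    have : l = ⟨(i : ℕ), by omega⟩ := Fin.ext h1
    rw [this, braidGen, Equiv.swap_apply_left]
  · by_cases h2 : (l : ℕ) = (i : ℕ) + 1
    · right; right
      refine ⟨?_, h2⟩
      have : l = ⟨(i : ℕ) + 1, by omega⟩ := Fin.ext h2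
      rw [this, braidGen, Equiv.swap_apply_right]
    · left
      refine ⟨h1, h2, ?_⟩
      rw [braidGen, Equiv.swap_apply_of_ne_of_ne]
      · intro h; exact h1 (congrArg Fin.val h)
      · intro h; exact h2 (congrArg Fin.val h)

lemma braidGen_invol (i : Fin (n - 1)) (l : Fin n) : braidGen n i (braidGen n i l) = l :=
  Equiv.swap_apply_self _ _ _

lemma gb_gp (i : Fin (n - 1)) (l : Fin n) :
    gb k G n ε i * gp k G n ε l = gp k G n ε (braidGen n i l) * gb k G n ε i := by
  rcases braidGen_cases n i l with ⟨h, h', e⟩ | ⟨h, h'⟩ | ⟨h, h'⟩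
  · rw [e]
    simpa only [gb, gbi, gp, gt, map_mul] using gq_rel k G n ε (GBRRel.bp_comm i l ⟨h, h'⟩)
  · simpa only [gb, gbi, gp, gt, map_mul] using gq_rel k G n ε (GBRRel.bp_slide i l _ h h')
  · simpa only [gb, gbi, gp, gt, map_mul] using gq_rel k G n ε (GBRRel.bp_slide' i _ l h h')

lemma gb_gt (g : G) (i : Fin (n - 1)) (l : Fin n) :
    gb k G n ε i * gt k G n ε g l = gt k G n ε g (braidGen n i l) * gb k G n ε i := by
  rcases braidGen_cases n i l with ⟨h, h', e⟩ | ⟨h, h'⟩ | ⟨h, h'⟩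
  · rw [e]
    simpa only [gb, gbi, gp, gt, map_mul] using gq_rel k G n ε (GBRRel.bt_comm g i l ⟨h, h'⟩)
  · simpa only [gb, gbi, gp, gt, map_mul] using gq_rel k G n ε (GBRRel.bt_slide g i l _ h h')
  · simpa only [gb, gbi, gp, gt, map_mul] using gq_rel k G n ε (GBRRel.bt_slide' g i _ l h h')

lemma gt_mul (g h : G) (j : Fin n) :
    gt k G n ε g j * gt k G n ε h j = gt k G n ε (g * h) j := by
  simpa only [gb, gbi, gp, gt, map_mul] using gq_rel k G n ε (GBRRel.t_mul g h j)

lemma gt_one (j : Fin n) : gt k G n ε 1 j = 1 := by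
  simpa only [gb, gbi, gp, gt, map_one] using gq_rel k G n ε (GBRRel.t_one j)

lemma gt_comm (g h : G) (j l : Fin n) (hjl : j ≠ l) :
    gt k G n ε g j * gt k G n ε h l = gt k G n ε h l * gt k G n ε g j := by
  simpa only [gb, gbi, gp, gt, map_mul] using gq_rel k G n ε (GBRRel.tt_comm g h j l hjl)

lemma gt_gp (g : G) (j l : Fin n) :
    gt k G n ε g j * gp k G n ε l = gp k G n ε l * gt k G n ε g j := by
  by_cases h : j = l
  · subst h
    have h1 : gt k G n ε g j * gp k G n ε j = gp k G n ε j := by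
      simpa only [gb, gbi, gp, gt, map_mul] using gq_rel k G n ε (GBRRel.tp_absorb g j)
    have h2 : gp k G n ε j * gt k G n ε g j = gp k G n ε j := by
      simpa only [gb, gbi, gp, gt, map_mul] using gq_rel k G n ε (GBRRel.pt_absorb g j)
    rw [h1, h2]
  · simpa only [gb, gbi, gp, gt, map_mul] using gq_rel k G n ε (GBRRel.tp_comm g j l h)

lemma gaug_b (i : Fin (n - 1)) : GBRaug k G n ε (gb k G n ε i) = 1 := by
  rw [GBRaug, gb, RingQuot.liftAlgHom_mkAlgHom_apply, FreeAlgebra.lift_ι_apply]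

lemma gaug_bi (i : Fin (n - 1)) : GBRaug k G n ε (gbi k G n ε i) = 1 := by
  rw [GBRaug, gbi, RingQuot.liftAlgHom_mkAlgHom_apply, FreeAlgebra.lift_ι_apply]

lemma gaug_p (j : Fin n) : GBRaug k G n ε (gp k G n ε j) = 0 := by
  rw [GBRaug, gp, RingQuot.liftAlgHom_mkAlgHom_apply, FreeAlgebra.lift_ι_apply]

lemma gaug_t (g : G) (j : Fin n) : GBRaug k G n ε (gt k G n ε g j) = 1 := by
  rw [GBRaug, gt, RingQuot.liftAlgHom_mkAlgHom_apply, FreeAlgebra.lift_ι_apply]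

/-- Induction principle for the diagram algebra. -/
lemma gInduction {C : GBRAlg k G n ε → Prop}
    (hr : ∀ r : k, C (algebraMap k _ r))
    (hb : ∀ i, C (gb k G n ε i)) (hbi : ∀ i, C (gbi k G n ε i))
    (hp : ∀ j, C (gp k G n ε j)) (ht : ∀ g j, C (gt k G n ε g j))
    (hmul : ∀ a b, C a → C b → C (a * b)) (hadd : ∀ a b, C a → C b → C (a + b))
    (a : GBRAlg k G n ε) : C a := by
  obtain ⟨x, rfl⟩ := RingQuot.mkAlgHom_surjective k (GBRRel k G n ε) a
  induction x using FreeAlgebra.induction with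
  | grade0 r => rw [AlgHom.commutes]; exact hr r
  | grade1 x =>
    cases x with
    | b i => exact hb i
    | bi i => exact hbi i
    | p j => exact hp j
    | t g j => exact ht g j
  | mul a b ha hb => rw [map_mul]; exact hmul _ _ ha hb
  | add a b ha hb => rw [map_add]; exact hadd _ _ ha hb

/-- The group `G^n ⋊ B_n`. -/
abbrev GBGrp : Type := (Fin n → G) ⋊[(permMulAut G n).comp (braidToPerm n)] BraidGroup n

/-- Braid generator in `G^n ⋊ B_n`. -/
def rb (i : Fin (n - 1)) : GBGrp G n := SemidirectProduct.inr (PresentedGroup.of i)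
/-- Label generator in `G^n ⋊ B_n`. -/
def rt (g : G) (j : Fin n) : GBGrp G n := SemidirectProduct.inl (Pi.mulSingle j g)

lemma braidToPerm_of (i : Fin (n - 1)) : braidToPerm n (PresentedGroup.of i) = braidGen n i :=
  PresentedGroup.toGroup.of _

lemma permMulAut_single (σ : Equiv.Perm (Fin n)) (j : Fin n) (g : G) :
    permMulAut G n σ (Pi.mulSingle j g) = Pi.mulSingle (σ j) g := by
  funext l
  change (Pi.mulSingle j g : Fin n → G) (σ.symm l) = _
  by_cases h : l = σ j
  · subst h; simp
  · rw [Pi.mulSingle_eq_of_ne h, Pi.mulSingle_eq_of_ne]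
    intro h'; exact h (by rw [← h']; simp)

lemma rb_rt (g : G) (i : Fin (n - 1)) (l : Fin n) :
    rb G n i * rt G n g l = rt G n g (braidGen n i l) * rb G n i := by
  have := SemidirectProduct.inl_aut (φ := (permMulAut G n).comp (braidToPerm n))
    (PresentedGroup.of i) (Pi.mulSingle l g)
  rw [MonoidHom.comp_apply, braidToPerm_of, permMulAut_single] at this
  rw [rb, rt, rt, this]
  simp

lemma rb_braid (i j : Fin (n - 1)) (h : (j : ℕ) = (i : ℕ) + 1) :
    rb G n i * rb G n j * rb G n i = rb G n j * rb G n i * rb G n j := by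
  simp only [rb, ← map_mul]
  congr 1
  exact PresentedGroup.mk_eq_mk_of_mul_inv_mem (rels := braidRels (n - 1))
    ⟨i, j, Or.inl ⟨h.symm, rfl⟩⟩

lemma rb_comm (i j : Fin (n - 1)) (h : (i : ℕ) + 1 < (j : ℕ)) :
    rb G n i * rb G n j = rb G n j * rb G n i := by
  simp only [rb, ← map_mul]
  congr 1
  exact PresentedGroup.mk_eq_mk_of_mul_inv_mem (rels := braidRels (n - 1))
    ⟨i, j, Or.inr ⟨h, rfl⟩⟩

lemma braidGen_of_ne (i : Fin (n - 1)) (l : Fin n)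
    (h : (l : ℕ) ≠ (i : ℕ) ∧ (l : ℕ) ≠ (i : ℕ) + 1) : braidGen n i l = l := by
  rcases braidGen_cases n i l with ⟨_, _, e⟩ | ⟨h', _⟩ | ⟨_, h'⟩
  · exact e
  · exact absurd h' h.1
  · exact absurd h' h.2

lemma braidGen_left (i : Fin (n - 1)) (j j' : Fin n) (h : (j : ℕ) = (i : ℕ))
    (h' : (j' : ℕ) = (i : ℕ) + 1) : braidGen n i j = j' := by
  rcases braidGen_cases n i j with ⟨h1, _, _⟩ | ⟨_, h1⟩ | ⟨_, h1⟩
  · exact absurd h h1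
  · exact Fin.ext (h1.trans h'.symm)
  · omega

lemma braidGen_right (i : Fin (n - 1)) (j j' : Fin n) (h : (j : ℕ) = (i : ℕ))
    (h' : (j' : ℕ) = (i : ℕ) + 1) : braidGen n i j' = j := by
  rw [← braidGen_left n i j j' h h', braidGen_invol]

/-- The images of the generators under `GBR_n → k[G^n ⋊ B_n]`. -/
def phiGen : GBRGen n G → MonoidAlgebra k (GBGrp G n)
  | GBRGen.b i => MonoidAlgebra.of k _ (rb G n i)
  | GBRGen.bi i => MonoidAlgebra.of k _ (rb G n i)⁻¹
  | GBRGen.p _ => 0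
  | GBRGen.t g j => MonoidAlgebra.of k _ (rt G n g j)

/-- The projection `GBR_n → k[G^n ⋊ B_n]` killing the `p j`. -/
def gphi : GBRAlg k G n ε →ₐ[k] MonoidAlgebra k (GBGrp G n) :=
  RingQuot.liftAlgHom k ⟨FreeAlgebra.lift k (phiGen k G n), by
    rintro x y h
    induction h with
    | b_inv_r i =>
      simp only [map_mul, map_one, FreeAlgebra.lift_ι_apply, phiGen]
      rw [← map_mul, mul_inv_cancel, map_one]
    | b_inv_l i =>
      simp only [map_mul, map_one, FreeAlgebra.lift_ι_apply, phiGen]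
      rw [← map_mul, inv_mul_cancel, map_one]
    | b_braid i j h =>
      simp only [map_mul, FreeAlgebra.lift_ι_apply, phiGen]
      simp only [← map_mul, rb_braid G n i j h]
    | bb_comm i j h =>
      simp only [map_mul, FreeAlgebra.lift_ι_apply, phiGen]
      simp only [← map_mul, rb_comm G n i j h]
    | t_mul g h j =>
      simp only [map_mul, FreeAlgebra.lift_ι_apply, phiGen]
      rw [← map_mul, rt, rt, rt, ← map_mul, Pi.mulSingle_mul]
    | t_one j =>
      simp only [map_one, FreeAlgebra.lift_ι_apply, phiGen]
      rw [rt, Pi.mulSingle_one, map_one, map_one]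
    | tt_comm g h j l hjl =>
      simp only [map_mul, FreeAlgebra.lift_ι_apply, phiGen]
      simp only [rt, ← map_mul]
      rw [(Pi.mulSingle_commute (f := fun _ : Fin n => G) hjl g h).eq]
    | bt_comm g i l h =>
      simp only [map_mul, FreeAlgebra.lift_ι_apply, phiGen]
      simp only [← map_mul, rb_rt, braidGen_of_ne n i l h]
    | bt_slide g i j j' h h' =>
      simp only [map_mul, FreeAlgebra.lift_ι_apply, phiGen]
      simp only [← map_mul, rb_rt, braidGen_left n i j j' h h']
    | bt_slide' g i j j' h h' =>
      simp only [map_mul, FreeAlgebra.lift_ι_apply, phiGen]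
      simp only [← map_mul, rb_rt, braidGen_right n i j j' h h']
    | _ => simp only [map_mul, map_smul, FreeAlgebra.lift_ι_apply, phiGen, mul_zero, zero_mul,
        smul_zero]⟩

lemma gphi_b (i : Fin (n - 1)) :
    gphi k G n ε (gb k G n ε i) = MonoidAlgebra.of k _ (rb G n i) := by
  rw [gphi, gb, RingQuot.liftAlgHom_mkAlgHom_apply, FreeAlgebra.lift_ι_apply]; rfl

lemma gphi_bi (i : Fin (n - 1)) :
    gphi k G n ε (gbi k G n ε i) = MonoidAlgebra.of k _ (rb G n i)⁻¹ := by
  rw [gphi, gbi, RingQuot.liftAlgHom_mkAlgHom_apply, FreeAlgebra.lift_ι_apply]; rfl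

lemma gphi_p (j : Fin n) : gphi k G n ε (gp k G n ε j) = 0 := by
  rw [gphi, gp, RingQuot.liftAlgHom_mkAlgHom_apply, FreeAlgebra.lift_ι_apply]; rfl

lemma gphi_t (g : G) (j : Fin n) :
    gphi k G n ε (gt k G n ε g j) = MonoidAlgebra.of k _ (rt G n g j) := by
  rw [gphi, gt, RingQuot.liftAlgHom_mkAlgHom_apply, FreeAlgebra.lift_ι_apply]; rfl

lemma exists_pi_aux (hε : IsUnit ε) (S : Finset (Fin n)) : ∃ π : GBRAlg k G n ε,
    (∀ j, π * gp k G n ε j = gp k G n ε j * π) ∧ (∀ j ∈ S, π * gp k G n ε j = 0) ∧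
    (∀ y, (∀ j, y * gp k G n ε j = 0) → y * π = y) ∧
    (∀ y, (∀ j, gp k G n ε j * y = 0) → π * y = y) ∧ GBRaug k G n ε π = 1 ∧
    gphi k G n ε π = 1 := by
  induction S using Finset.induction_on with
  | empty => exact ⟨1, by simp, by simp, by simp, by simp, by simp, by simp⟩
  | insert l S _ ih =>
    obtain ⟨π, h1, h2, h3, h4, h5, h6⟩ := ih
    obtain ⟨u, rfl⟩ := hε
    refine ⟨π * (1 - (↑u⁻¹ : k) • gp k G n _ l), ?_, ?_, ?_, ?_, ?_, ?_⟩
    · intro j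
      rw [mul_assoc, sub_mul, smul_mul_assoc, gp_comm k G n _ l j, one_mul, ← mul_assoc, ← h1,
        mul_assoc, mul_sub (gp k G n _ j), mul_smul_comm, mul_one]
    · intro j hj
      rcases Finset.mem_insert.1 hj with rfl | hj
      · rw [mul_assoc, sub_mul, smul_mul_assoc, gp_sq, smul_smul, Units.inv_mul, one_smul,
          one_mul, sub_self, mul_zero]
      · rw [mul_assoc, sub_mul, smul_mul_assoc, gp_comm k G n _ l j, one_mul, mul_sub,
          mul_smul_comm, ← mul_assoc, h2 j hj, zero_mul, smul_zero, sub_zero]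
    · intro y hy
      rw [← mul_assoc, h3 y hy, mul_sub, mul_smul_comm, hy, smul_zero, mul_one, sub_zero]
    · intro y hy
      rw [mul_assoc, sub_mul, smul_mul_assoc, hy, smul_zero, one_mul, sub_zero, h4 y hy]
    · rw [map_mul, map_sub, map_smul, gaug_p, h5, map_one]; simp
    · rw [map_mul, map_sub, map_smul, gphi_p, h6, map_one]; simp

lemma exists_pi (hε : IsUnit ε) : ∃ π : GBRAlg k G n ε,
    (∀ j, π * gp k G n ε j = 0) ∧ GBRaug k G n ε π = 1 ∧ gphi k G n ε π = 1 ∧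
    π * π = π ∧ ∀ a, π * a = a * π := by
  obtain ⟨π, h1, h2, h3, h4, h5, h6⟩ := exists_pi_aux k G n ε hε Finset.univ
  have h2 : ∀ j, π * gp k G n ε j = 0 := fun j => h2 j (Finset.mem_univ j)
  have h2' : ∀ j, gp k G n ε j * π = 0 := fun j => (h1 j).symm.trans (h2 j)
  have hb : ∀ i, π * gb k G n ε i = gb k G n ε i * π := by
    intro i
    rw [← h3 (π * gb k G n ε i), mul_assoc, h4]
    · intro j
      have := gb_gp k G n ε i (braidGen n i j)
      rw [braidGen_invol] at this
      rw [← mul_assoc, ← this, mul_assoc, h2', mul_zero]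
    · intro j
      rw [mul_assoc, gb_gp, ← mul_assoc, h2, zero_mul]
  refine ⟨π, h2, h5, h6, h3 π h2, ?_⟩
  intro a
  induction a using gInduction with
  | hr r => exact (Algebra.commutes r π).symm
  | hb i => exact hb i
  | hbi i =>
    calc π * gbi k G n ε i = gbi k G n ε i * gb k G n ε i * (π * gbi k G n ε i) := by
          rw [gbi_gb, one_mul]
      _ = gbi k G n ε i * (gb k G n ε i * π) * gbi k G n ε i := by simp only [mul_assoc]
      _ = gbi k G n ε i * π := by rw [← hb, mul_assoc, mul_assoc, gb_gbi, mul_one]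
  | hp j => rw [h2, h2']
  | ht g l =>
    rw [← h3 (π * gt k G n ε g l), mul_assoc, h4]
    · intro j
      rw [← mul_assoc, ← gt_gp, mul_assoc, h2', mul_zero]
    · intro j
      rw [mul_assoc, gt_gp, ← mul_assoc, h2, zero_mul]
  | hmul a b ha hb => rw [← mul_assoc, ha, mul_assoc, hb, mul_assoc]
  | hadd a b ha hb => rw [mul_add, add_mul, ha, hb]

/-- `b_i` as a unit. -/
def ub (i : Fin (n - 1)) : (GBRAlg k G n ε)ˣ :=
  ⟨gb k G n ε i, gbi k G n ε i, gb_gbi k G n ε i, gbi_gb k G n ε i⟩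

/-- The labels on the strand `j` as units. -/
def ut (j : Fin n) : G →* (GBRAlg k G n ε)ˣ :=
  MonoidHom.toHomUnits
    { toFun := fun g => gt k G n ε g j
      map_one' := gt_one k G n ε j
      map_mul' := fun g h => (gt_mul k G n ε g h j).symm }

lemma ut_val (g : G) (j : Fin n) : (ut k G n ε j g : GBRAlg k G n ε) = gt k G n ε g j := rfl

/-- `B_n → GBR_n^×`. -/
def uB : BraidGroup n →* (GBRAlg k G n ε)ˣ :=
  PresentedGroup.toGroup (f := ub k G n ε) (by
    rintro r ⟨i, j, (⟨hij, rfl⟩ | ⟨hij, rfl⟩)⟩ <;>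
      simp only [map_mul, map_inv, FreeGroup.lift_apply_of] <;> rw [mul_inv_eq_one]
    · exact Units.ext (gb_braid k G n ε i j hij.symm)
    · exact Units.ext (gb_comm k G n ε i j hij))

lemma uB_of (i : Fin (n - 1)) : uB k G n ε (PresentedGroup.of i) = ub k G n ε i :=
  PresentedGroup.toGroup.of _

/-- `G^n → GBR_n^×`. -/
def uT : (Fin n → G) →* (GBRAlg k G n ε)ˣ :=
  MonoidHom.noncommPiCoprod (ut k G n ε)
    (fun j l hjl x y => Units.ext (gt_comm k G n ε x y j l hjl))

lemma uT_single (j : Fin n) (g : G) : uT k G n ε (Pi.mulSingle j g) = ut k G n ε j g :=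
  MonoidHom.noncommPiCoprod_mulSingle _ _ _

lemma uT_conj (β : BraidGroup n) (x : Fin n → G) :
    uT k G n ε ((permMulAut G n).comp (braidToPerm n) β x)
      = uB k G n ε β * uT k G n ε x * (uB k G n ε β)⁻¹ := by
  have hβ : β ∈ Subgroup.closure (Set.range (PresentedGroup.of (rels := braidRels (n - 1)))) := by
    rw [PresentedGroup.closure_range_of]; trivial
  induction hβ using Subgroup.closure_induction generalizing x with
  | mem β h =>
    obtain ⟨i, rfl⟩ := h
    have : (uT k G n ε).comp ((permMulAut G n (braidGen n i)).toMonoidHom)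
        = (MulAut.conj (ub k G n ε i)).toMonoidHom.comp (uT k G n ε) := by
      refine MonoidHom.pi_ext fun j g => ?_
      change uT k G n ε (permMulAut G n (braidGen n i) (Pi.mulSingle j g))
        = ub k G n ε i * uT k G n ε (Pi.mulSingle j g) * (ub k G n ε i)⁻¹
      rw [permMulAut_single, uT_single, uT_single, eq_mul_inv_iff_mul_eq]
      exact Units.ext (gb_gt k G n ε g i j).symm
    rw [MonoidHom.comp_apply, braidToPerm_of, uB_of]
    exact DFunLike.congr_fun this x
  | one => simp
  | mul a b _ _ ha hb =>
    rw [map_mul, MulAut.mul_apply, ha, hb, map_mul]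
    group
  | inv a _ ha =>
    have h := ha (((permMulAut G n).comp (braidToPerm n)) a⁻¹ x)
    rw [← MulAut.mul_apply, ← map_mul, mul_inv_cancel, map_one, MulAut.one_apply] at h
    rw [h, map_inv (uB k G n ε)]
    simp only [mul_assoc, inv_mul_cancel_left, inv_inv, inv_mul_cancel, mul_one]

/-- `G^n ⋊ B_n → GBR_n^×`. -/
def uG : GBGrp G n →* (GBRAlg k G n ε)ˣ :=
  SemidirectProduct.lift (uT k G n ε) (uB k G n ε)
    (fun β => MonoidHom.ext fun x => uT_conj k G n ε β x)

lemma uG_rb (i : Fin (n - 1)) : uG k G n ε (rb G n i) = ub k G n ε i := by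
  rw [uG, rb, SemidirectProduct.lift_inr, uB_of]

lemma uG_rt (g : G) (j : Fin n) : uG k G n ε (rt G n g j) = ut k G n ε j g := by
  rw [uG, rt, SemidirectProduct.lift_inl, uT_single]

/-- Homomorphisms out of `G^n ⋊ B_n` are determined on generators. -/
lemma GBGrp_ext {M : Type} [Group M] {f g : GBGrp G n →* M}
    (hb : ∀ i, f (rb G n i) = g (rb G n i)) (ht : ∀ x j, f (rt G n x j) = g (rt G n x j)) :
    f = g := by
  refine SemidirectProduct.hom_ext ?_ ?_
  · exact MonoidHom.pi_ext fun j x => ht x j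
  · exact PresentedGroup.ext hb

lemma GBGrp_ext' {M : Type} [Monoid M] {f g : GBGrp G n →* M}
    (hb : ∀ i, f (rb G n i) = g (rb G n i)) (ht : ∀ x j, f (rt G n x j) = g (rt G n x j)) :
    f = g := by
  have : f.toHomUnits = g.toHomUnits :=
    GBGrp_ext G n (fun i => Units.ext (hb i)) (fun x j => Units.ext (ht x j))
  refine MonoidHom.ext fun x => ?_
  exact congrArg Units.val (DFunLike.congr_fun this x)

/-- `k[G^n ⋊ B_n] → GBR_n`. -/
def gpsi : MonoidAlgebra k (GBGrp G n) →ₐ[k] GBRAlg k G n ε :=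
  MonoidAlgebra.lift k _ _ ((Units.coeHom _).comp (uG k G n ε))

lemma gpsi_of (x : GBGrp G n) :
    gpsi k G n ε (MonoidAlgebra.of k _ x) = (uG k G n ε x : GBRAlg k G n ε) :=
  MonoidAlgebra.lift_of _ _

lemma groupAug_of (x : GBGrp G n) :
    groupAug k (GBGrp G n) (MonoidAlgebra.of k _ x) = 1 :=
  MonoidAlgebra.lift_of _ _

lemma GBAlg_ext {M : Type} [Ring M] [Algebra k M] {f g : MonoidAlgebra k (GBGrp G n) →ₐ[k] M}
    (hb : ∀ i, f (MonoidAlgebra.of k _ (rb G n i)) = g (MonoidAlgebra.of k _ (rb G n i)))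
    (ht : ∀ x j, f (MonoidAlgebra.of k _ (rt G n x j)) = g (MonoidAlgebra.of k _ (rt G n x j))) :
    f = g := by
  apply (MonoidAlgebra.lift k M (GBGrp G n)).symm.injective
  exact GBGrp_ext' G n hb ht

lemma gphi_gpsi (x : MonoidAlgebra k (GBGrp G n)) : gphi k G n ε (gpsi k G n ε x) = x := by
  have : (gphi k G n ε).comp (gpsi k G n ε) = AlgHom.id k _ := by
    apply GBAlg_ext
    · intro i
      rw [AlgHom.comp_apply, gpsi_of, uG_rb]
      exact gphi_b k G n ε i
    · intro g j
      rw [AlgHom.comp_apply, gpsi_of, uG_rt, ut_val, gphi_t]; rfl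
  exact DFunLike.congr_fun this x

lemma gaug_gpsi (x : MonoidAlgebra k (GBGrp G n)) :
    GBRaug k G n ε (gpsi k G n ε x) = groupAug k (GBGrp G n) x := by
  have : (GBRaug k G n ε).comp (gpsi k G n ε) = groupAug k (GBGrp G n) := by
    apply GBAlg_ext
    · intro i
      rw [AlgHom.comp_apply, gpsi_of, uG_rb, groupAug_of]
      exact gaug_b k G n ε i
    · intro g j
      rw [AlgHom.comp_apply, gpsi_of, uG_rt, ut_val, gaug_t, groupAug_of]
  exact DFunLike.congr_fun this x

lemma groupAug_gphi (a : GBRAlg k G n ε) :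
    groupAug k (GBGrp G n) (gphi k G n ε a) = GBRaug k G n ε a := by
  induction a using gInduction with
  | hr r => simp only [AlgHom.commutes]
  | hb i => rw [gphi_b, groupAug_of, gaug_b]
  | hbi i => rw [gphi_bi, groupAug_of, gaug_bi]
  | hp j => rw [gphi_p, map_zero, gaug_p]
  | ht g j => rw [gphi_t, groupAug_of, gaug_t]
  | hmul a b ha hb => simp only [map_mul, ha, hb]
  | hadd a b ha hb => simp only [map_add, ha, hb]

lemma gpsi_gphi (π : GBRAlg k G n ε) (hp : ∀ j, π * gp k G n ε j = 0)
    (hc : ∀ a, π * a = a * π) (a : GBRAlg k G n ε) :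
    π * gpsi k G n ε (gphi k G n ε a) = π * a := by
  induction a using gInduction with
  | hr r => simp only [AlgHom.commutes]
  | hb i => rw [gphi_b, gpsi_of, uG_rb]; rfl
  | hbi i => rw [gphi_bi, gpsi_of, map_inv, uG_rb]; rfl
  | hp j => rw [gphi_p, map_zero, hp, mul_zero]
  | ht g j => rw [gphi_t, gpsi_of, uG_rt, ut_val]
  | hmul a b ha hb =>
    rw [map_mul, map_mul, ← mul_assoc, ha, hc, mul_assoc, hb, ← mul_assoc, ← hc, mul_assoc]
  | hadd a b ha hb => simp only [map_add, mul_add, ha, hb]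

end GBRHelpers

/-- **Homology of `G`-equivariant braided rook algebras** (invertible parameter).
Let `G` be a group, `k` a commutative `G`-ring, `n` a natural number, and `ε ∈ k`
invertible.  Then there is an isomorphism of graded `k`-modules
`Tor_*^{GBR_n(ε)}(𝟙,𝟙) ≅ Tor_*^{k[G^n ⋊ B_n]}(k,k) = H_*(G^n ⋊ B_n; k)`,
where the braid group `B_n` acts on `G^n` by permuting the factors via `B_n → Σ_n`. -/
theorem equivariant_braided_rook_homology (k G : Type) [CommRing k] [Group G]
    (ρ : G →* RingAut k) (n : ℕ) (ε : k) (hε : IsUnit ε) (q : ℕ) :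
    Nonempty ((barTor k (GBRAlg k G n ε) (GBRaug k G n ε) q) ≃ₗ[k]
      (groupTor k ((Fin n → G) ⋊[(permMulAut G n).comp (braidToPerm n)] BraidGroup n) q)) := by
  obtain ⟨π, hp, hπ, h1, hi, hc⟩ := exists_pi k G n ε hε
  refine ⟨torEquiv _ _ π hπ hi hc (gphi k G n ε).toLinearMap (map_mul (gphi k G n ε))
    (groupAug_gphi k G n ε)
    ((LinearMap.mulLeft k π).comp (gpsi k G n ε).toLinearMap) ?_ ?_ ?_
    (gpsi_gphi k G n ε π hp hc) q⟩
  · intro a b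
    change π * gpsi k G n ε (a * b) = π * gpsi k G n ε a * (π * gpsi k G n ε b)
    rw [map_mul, ← mul_assoc (π * gpsi k G n ε a), ← hc (π * gpsi k G n ε a), ← mul_assoc π π, hi,
      mul_assoc]
  · intro a
    change GBRaug k G n ε (π * gpsi k G n ε a) = _
    rw [map_mul, hπ, one_mul, gaug_gpsi]
  · intro a
    change gphi k G n ε (π * gpsi k G n ε a) = a
    rw [map_mul, h1, one_mul, gphi_gpsi]
end
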